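/- (Consensus error lemma.) Suppose Assumptions 1–2 hold, λ̃ᵗ = Ãᵀμ for some μ, X^{t+1} = βXᵗ + (1−β)X̂ᵗ − α(∇𝐟(Xᵗ) + λ̃ᵗ + θÃᵀÃX̂ᵗ) with β = 1 − αθM, and the stepsizes satisfy αθρ̃₁ ≤ 1 and αθρ̃₁² ≤ 2ρ̃₂. Then, with vᵗ = α(λ̃ᵗ + ∇𝐟((𝟙 ⊗ I_d)X̄ᵗ)): ‖X^{t+1}‖²_{K̃} ≤ (1 + α − 2αθρ̃₂ + α²θ²ρ̃₁² + (2α + 3α²)L²)‖Xᵗ‖²_{K̃} − 2⟨Xᵗ, vᵗ⟩_{(I − αθÃᵀÃ)K̃} + 3‖vᵗ‖²_{K̃} + (2α + 3α²)θ²(ρ̃₁ + M)²‖X̂ᵗ − Xᵗ‖². -/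

import Mathlib

/-!
Write `S` for the Laplacian `ÃᵀÃ`, `K` for the consensus projector, `M = ‖S‖₂` and `E = X̂ - X`.
The primal step can be rearranged as
`X⁺ = (1 - αθS) X - v + α u`, where `u = θ (M - S) E - g` and `g = ∇𝐟(X) - ∇𝐟((𝟙 ⊗ I) X̄)`.
Since `S K = K S = S`, applying `K` gives `K X⁺ = a - K v + α K u` with `a = K X - αθ S X`. Then:

* `ρ₂ K ⪯ S` and `S² ⪯ ρ₁ S ⪯ ρ₁² K` (`lapl_sq_le`) give
  `‖a‖² ≤ (1 - 2αθρ₂ + α²θ²ρ₁²) ‖K X‖²`, a factor which is at most `1` by the step-size condition;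
* `S ⪰ 0` and `‖S E‖ ≤ ρ₁ ‖E‖` give `‖(M - S) E‖ ≤ (ρ₁ + M) ‖E‖`, and smoothness gives
  `‖g‖ ≤ L ‖K X‖` (`gradF_sub_sq_le`), so `‖u‖² ≤ 2θ²(ρ₁ + M)² ‖E‖² + 2L² ‖K X‖²`;
* expanding `‖a - K v + α K u‖²`, the cross term `⟨a, K v⟩` is kept, while Young's inequality
  bounds `2⟨a, α K u⟩` by `α‖a‖² + α‖K u‖²` and `-2⟨K v, α K u⟩` by `2‖K v‖² + (α²/2)‖K u‖²`
  (`expand_young`).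
-/

open Matrix MeasureTheory ProbabilityTheory
open scoped Kronecker

noncomputable section

/-- squared Euclidean norm ‖v‖² of a finitely indexed real vector. -/
def sqnorm {ι : Type*} [Fintype ι] (v : ι → ℝ) : ℝ := ∑ i, (v i) ^ 2

/-- Euclidean norm ‖v‖. -/
def enorm' {ι : Type*} [Fintype ι] (v : ι → ℝ) : ℝ := Real.sqrt (sqnorm v)

/-- matrix-weighted squared (semi)norm ‖v‖²_P = vᵀ P v. -/
def wnorm2 {ι : Type*} [Fintype ι] (P : Matrix ι ι ℝ) (v : ι → ℝ) : ℝ := v ⬝ᵥ P.mulVec v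

/-- matrix-weighted inner product ⟨x, y⟩_P = xᵀ P y. -/
def winner {ι : Type*} [Fintype ι] (P : Matrix ι ι ℝ) (x y : ι → ℝ) : ℝ := x ⬝ᵥ P.mulVec y

/-- the consensus projector K̃ = (Iₙ − (1/n)𝟙𝟙ᵀ) ⊗ I_d. -/
def Ktil (n d : ℕ) : Matrix (Fin n × Fin d) (Fin n × Fin d) ℝ :=
  ((1 : Matrix (Fin n) (Fin n) ℝ) - (n : ℝ)⁻¹ • Matrix.of (fun _ _ => (1 : ℝ))) ⊗ₖ
    (1 : Matrix (Fin d) (Fin d) ℝ)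

/-- `A` is a (signed) incidence matrix of an undirected graph: each row has exactly one `+1`
entry and one `-1` entry, all other entries being `0`. -/
def IsIncidence {e n : ℕ} (A : Matrix (Fin e) (Fin n) ℝ) : Prop :=
  ∀ r : Fin e, ∃ i j : Fin n, i ≠ j ∧ A r i = 1 ∧ A r j = -1 ∧
    ∀ k : Fin n, k ≠ i → k ≠ j → A r k = 0

/-- `Q` is the Moore–Penrose pseudoinverse of `S` (the four Penrose conditions). -/
def IsMoorePenrose {ι : Type*} [Fintype ι] [DecidableEq ι] (S Q : Matrix ι ι ℝ) : Prop :=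
  S * Q * S = S ∧ Q * S * Q = Q ∧ (S * Q)ᵀ = S * Q ∧ (Q * S)ᵀ = Q * S

/-- the ℓ₂ operator (spectral) norm of a square matrix. -/
def specNorm {ι : Type*} [Fintype ι] [DecidableEq ι] (S : Matrix ι ι ℝ) : ℝ :=
  ‖Matrix.toEuclideanCLM (𝕜 := ℝ) S‖

/-- Ã = A ⊗ I_d. -/
def Atil {e n : ℕ} (d : ℕ) (A : Matrix (Fin e) (Fin n) ℝ) :
    Matrix (Fin e × Fin d) (Fin n × Fin d) ℝ :=
  A ⊗ₖ (1 : Matrix (Fin d) (Fin d) ℝ)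

/-- the (tensored) graph Laplacian ÃᵀÃ. -/
def lapl {e n : ℕ} (d : ℕ) (A : Matrix (Fin e) (Fin n) ℝ) :
    Matrix (Fin n × Fin d) (Fin n × Fin d) ℝ :=
  (Atil d A)ᵀ * Atil d A

/-- the network average X̄ = (1/n)(𝟙ᵀ ⊗ I_d)X. -/
def xbar {n d : ℕ} (X : Fin n × Fin d → ℝ) : Fin d → ℝ := fun j => (n : ℝ)⁻¹ * ∑ i, X (i, j)

/-- the consensus embedding (𝟙 ⊗ I_d)x̄ of a vector x̄ ∈ ℝ^d into ℝ^{nd}. -/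
def consVec {d : ℕ} (n : ℕ) (x : Fin d → ℝ) : Fin n × Fin d → ℝ := fun p => x p.2

/-- the stacked gradient ∇𝐟(X) = (∇f₁(X₁), …, ∇f_n(X_n)). -/
def gradF {n d : ℕ} (gradf : Fin n → (Fin d → ℝ) → (Fin d → ℝ)) (X : Fin n × Fin d → ℝ) :
    Fin n × Fin d → ℝ := fun p => gradf p.1 (fun j => X (p.1, j)) p.2

/-- the averaged objective f(x̄) = (1/n)∑ᵢ fᵢ(x̄). -/
def fbar {n d : ℕ} (f : Fin n → (Fin d → ℝ) → ℝ) (x : Fin d → ℝ) : ℝ :=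
  (n : ℝ)⁻¹ * ∑ i, f i x

/-- the averaged gradient ∇f(x̄) = (1/n)∑ᵢ ∇fᵢ(x̄). -/
def gradfbar {n d : ℕ} (gradf : Fin n → (Fin d → ℝ) → (Fin d → ℝ)) (x : Fin d → ℝ) :
    Fin d → ℝ := fun j => (n : ℝ)⁻¹ * ∑ i, gradf i x j

/-- a gradient vector, seen as a continuous linear functional on ℝ^d. -/
def dotCLM {d : ℕ} (g : Fin d → ℝ) : (Fin d → ℝ) →L[ℝ] ℝ :=
  ∑ j, g j • ContinuousLinearMap.proj j

/-- the auxiliary dual-tracking variable vᵗ = α(λ̃ᵗ + ∇𝐟((𝟙 ⊗ I_d)X̄ᵗ)). -/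
def vTi {n d : ℕ} (gradf : Fin n → (Fin d → ℝ) → (Fin d → ℝ)) (α : ℝ)
    (lam X : Fin n × Fin d → ℝ) : Fin n × Fin d → ℝ :=
  α • (lam + gradF gradf (consVec n (xbar X)))

/-- δ̃ = max{(1−δ)²(1−δ/2)²/((1−δ/2)²−(1−δ)²), 1}. -/
def deltaTil (δ : ℝ) : ℝ := max ((1 - δ) ^ 2 * (1 - δ / 2) ^ 2 / ((1 - δ / 2) ^ 2 - (1 - δ) ^ 2)) 1

/-- δ₂ = max{16η/δ, 1}. -/
def delta2 (δ η : ℝ) : ℝ := max (16 * η / δ) 1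

/-- δ₁ = 12·max{2, 2/(ρ̃₂η), δ₂δ̃}. -/
def delta1 (δ η ρ₂ : ℝ) : ℝ := 12 * max (max 2 (2 / (ρ₂ * η))) (delta2 δ η * deltaTil δ)

/-- θ_lb. -/
def thetaLb (n : ℕ) (L a η ρ₁ ρ₂ δ : ℝ) : ℝ :=
  max (4 * L ^ 2 / (n * ρ₂ * a))
    ((2 / ρ₂) * (1 + 2 * L + 8 * η * ρ₁ ^ 2 / ρ₂ +
      delta1 δ η ρ₂ * (3 / 2 + 3 * L ^ 2 + η * ρ₁ + ρ₁ ^ 2 / 2)))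

/-- α_ub = (max{16η, δ}/(320θ²))·min{1/M², na/M², 1/ρ̃₁²}. -/
def alphaUb (n : ℕ) (a η δ θ M ρ₁ : ℝ) : ℝ :=
  (max (16 * η) δ / (320 * θ ^ 2)) * min (min (1 / M ^ 2) (n * a / M ^ 2)) (1 / ρ₁ ^ 2)

/-- one step of the TiCoPD recursion, driven by compression randomness ξ. -/
def TiCoPD {e n d : ℕ} {Ω S : Type*} (A : Matrix (Fin e) (Fin n) ℝ)
    (gradf : Fin n → (Fin d → ℝ) → (Fin d → ℝ)) (α β θ η : ℝ)
    (ξ : ℕ → Ω → S) (Q : (Fin n × Fin d → ℝ) → S → (Fin n × Fin d → ℝ))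
    (X Xhat lam : ℕ → Ω → (Fin n × Fin d → ℝ)) : Prop :=
  ∀ t ω,
    X (t + 1) ω = β • X t ω + (1 - β) • Xhat t ω -
        α • (gradF gradf (X t ω) + lam t ω + θ • (lapl d A).mulVec (Xhat t ω)) ∧
    lam (t + 1) ω = lam t ω + η • (lapl d A).mulVec (Xhat t ω) ∧
    Xhat (t + 1) ω = Xhat t ω + Q (X (t + 1) ω - Xhat t ω) (ξ (t + 1) ω)

/-- the Lyapunov function F_t of Theorem 1. -/
def FLyap {n d : ℕ} (f : Fin n → (Fin d → ℝ) → ℝ)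
    (gradf : Fin n → (Fin d → ℝ) → (Fin d → ℝ))
    (Qtil : Matrix (Fin n × Fin d) (Fin n × Fin d) ℝ)
    (fstar a α η θ δ₁ δ₂ : ℝ) (X Xhat lam : Fin n × Fin d → ℝ) : ℝ :=
  fbar f (xbar X) - fstar +
    (a / (η * α)) *
      wnorm2 (Qtil + (α * ((δ₁ / 2) * (θ + η) - θ - δ₂ * θ)) • Ktil n d) (vTi gradf α lam X) +
    a * wnorm2 (Ktil n d) X +
    δ₁ * a * winner (Ktil n d) X (vTi gradf α lam X) +
    δ₂ * a * sqnorm (Xhat - X)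

lemma sqnorm_eq_dot {ι : Type*} [Fintype ι] (v : ι → ℝ) : sqnorm v = v ⬝ᵥ v := by
  simp [sqnorm, dotProduct, pow_two]

lemma dot_self_nonneg' {ι : Type*} [Fintype ι] (v : ι → ℝ) : 0 ≤ v ⬝ᵥ v := by
  rw [← sqnorm_eq_dot]
  exact Finset.sum_nonneg fun i _ => sq_nonneg _

lemma dot_mulVec_symm {ι : Type*} [Fintype ι] {S : Matrix ι ι ℝ} (hS : Sᵀ = S) (x y : ι → ℝ) :
    x ⬝ᵥ S *ᵥ y = S *ᵥ x ⬝ᵥ y := by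
  rw [dotProduct_mulVec, ← mulVec_transpose, hS]

lemma posSemidef_dot_nonneg {ι : Type*} [Fintype ι] {S : Matrix ι ι ℝ} (hS : S.PosSemidef)
    (x : ι → ℝ) : 0 ≤ x ⬝ᵥ S *ᵥ x := by
  simpa using hS.dotProduct_mulVec_nonneg x

lemma Ktil_mulVec {n d : ℕ} (X : Fin n × Fin d → ℝ) :
    Ktil n d *ᵥ X = X - consVec n (xbar X) := by
  ext ⟨i, j⟩
  simp only [mulVec, dotProduct, Ktil, kroneckerMap_apply, Fintype.sum_prod_type, Pi.sub_apply,
    consVec, xbar, Matrix.sub_apply, Matrix.smul_apply, of_apply, one_apply, smul_eq_mul,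
    mul_one, sub_mul, ite_mul, mul_ite, one_mul, zero_mul, mul_zero]
  simp [Finset.mul_sum]

lemma Ktil_transpose (n d : ℕ) : (Ktil n d)ᵀ = Ktil n d := by
  ext ⟨i, j⟩ ⟨i', j'⟩
  simp [Ktil, kroneckerMap_apply, one_apply, eq_comm]

lemma lapl_transpose {e n : ℕ} (d : ℕ) (A : Matrix (Fin e) (Fin n) ℝ) :
    (lapl d A)ᵀ = lapl d A := by
  simp [lapl]

/-- An incidence matrix annihilates consensus vectors, because each of its rows sums to zero. -/
lemma lapl_consVec {e n d : ℕ} {A : Matrix (Fin e) (Fin n) ℝ} (hA : IsIncidence A)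
    (x : Fin d → ℝ) : lapl d A *ᵥ consVec n x = 0 := by
  have hrow (r : Fin e) : ∑ k, A r k = 0 := by
    obtain ⟨i, j, hij, hi, hj, h0⟩ := hA r
    rw [Fintype.sum_eq_add i j hij fun k hk => h0 k hk.1 hk.2, hi, hj]
    norm_num
  have h : Atil d A *ᵥ consVec n x = 0 := by
    ext ⟨r, j⟩
    simp [mulVec, dotProduct, Atil, kroneckerMap_apply, Fintype.sum_prod_type, consVec, one_apply,
      ← Finset.sum_mul, hrow]
  rw [lapl, ← mulVec_mulVec, h, mulVec_zero]

lemma Ktil_consVec {n d : ℕ} (hn : 2 ≤ n) (x : Fin d → ℝ) : Ktil n d *ᵥ consVec n x = 0 := by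
  have : (n : ℝ) ≠ 0 := by positivity
  rw [Ktil_mulVec]
  ext ⟨i, j⟩
  simp [consVec, xbar, this]

lemma Ktil_Ktil {n d : ℕ} (hn : 2 ≤ n) (X : Fin n × Fin d → ℝ) :
    Ktil n d *ᵥ (Ktil n d *ᵥ X) = Ktil n d *ᵥ X := by
  conv_lhs => rw [Ktil_mulVec X, mulVec_sub, Ktil_consVec hn, sub_zero]

lemma lapl_Ktil {e n d : ℕ} {A : Matrix (Fin e) (Fin n) ℝ} (hA : IsIncidence A)
    (X : Fin n × Fin d → ℝ) : lapl d A *ᵥ (Ktil n d *ᵥ X) = lapl d A *ᵥ X := by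
  rw [Ktil_mulVec, mulVec_sub, lapl_consVec hA, sub_zero]

lemma Ktil_lapl {e n d : ℕ} {A : Matrix (Fin e) (Fin n) ℝ} (hA : IsIncidence A)
    (X : Fin n × Fin d → ℝ) : Ktil n d *ᵥ (lapl d A *ᵥ X) = lapl d A *ᵥ X := by
  have h : lapl d A * Ktil n d = lapl d A :=
    ext_iff_mulVec.mpr fun v => by rw [← mulVec_mulVec, lapl_Ktil hA]
  have h' := congrArg transpose h
  rw [transpose_mul, Ktil_transpose, lapl_transpose] at h'
  rw [mulVec_mulVec, h']

lemma wnorm2_Ktil {n d : ℕ} (hn : 2 ≤ n) (X : Fin n × Fin d → ℝ) :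
    wnorm2 (Ktil n d) X = Ktil n d *ᵥ X ⬝ᵥ Ktil n d *ᵥ X := by
  rw [← dot_mulVec_symm (Ktil_transpose n d), Ktil_Ktil hn]
  rfl

/-- `K` is an orthogonal projector, hence a contraction. -/
lemma Ktil_contract {n d : ℕ} (hn : 2 ≤ n) (X : Fin n × Fin d → ℝ) :
    Ktil n d *ᵥ X ⬝ᵥ Ktil n d *ᵥ X ≤ X ⬝ᵥ X := by
  have h := dot_self_nonneg' (X - Ktil n d *ᵥ X)
  have h1 : X ⬝ᵥ Ktil n d *ᵥ X = Ktil n d *ᵥ X ⬝ᵥ Ktil n d *ᵥ X := (wnorm2_Ktil hn X)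
  rw [sub_dotProduct, dotProduct_sub, dotProduct_sub, dotProduct_comm (Ktil n d *ᵥ X) X, h1] at h
  linarith

/-- `0 ⪯ S ⪯ ρ` implies `S² ⪯ ρ S`. This follows from the identity
`ρ S (ρ - S) = S (ρ - S) S + (ρ - S) S (ρ - S)`, whose right-hand side is a sum of congruences
of positive semidefinite matrices. -/
lemma lapl_sq_le {ι : Type*} [Fintype ι] {S : Matrix ι ι ℝ} {ρ : ℝ} (hρ : 0 < ρ) (hS : Sᵀ = S)
    (h0 : ∀ x, 0 ≤ x ⬝ᵥ S *ᵥ x) (h1 : ∀ x, x ⬝ᵥ S *ᵥ x ≤ ρ * (x ⬝ᵥ x)) (x : ι → ℝ) :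
    S *ᵥ x ⬝ᵥ S *ᵥ x ≤ ρ * (x ⬝ᵥ S *ᵥ x) := by
  have hz := h0 (ρ • x - S *ᵥ x)
  have hy := h1 (S *ᵥ x)
  rw [mulVec_sub, mulVec_smul, dotProduct_sub, sub_dotProduct, sub_dotProduct] at hz
  simp only [smul_dotProduct, dotProduct_smul, smul_eq_mul] at hz
  rw [dot_mulVec_symm hS x (S *ᵥ x)] at hz
  refine le_of_mul_le_mul_left ?_ hρ
  linarith

/-- Blockwise Lipschitz continuity of the gradients, summed over the nodes. With `Y = (𝟙 ⊗ I) X̄`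
the right-hand side is `L² ‖K X‖²`. -/
lemma gradF_sub_sq_le {n d : ℕ} {gradf : Fin n → (Fin d → ℝ) → (Fin d → ℝ)} {L : ℝ}
    (hlip : ∀ i x y, enorm' (gradf i x - gradf i y) ≤ L * enorm' (x - y))
    (X Y : Fin n × Fin d → ℝ) :
    sqnorm (gradF gradf X - gradF gradf Y) ≤ L ^ 2 * sqnorm (X - Y) := by
  have hsq (v : Fin d → ℝ) : enorm' v ^ 2 = sqnorm v :=
    Real.sq_sqrt (Finset.sum_nonneg fun i _ => sq_nonneg _)
  have key (i : Fin n) := pow_le_pow_left₀ (Real.sqrt_nonneg _)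
    (hlip i (fun j => X (i, j)) (fun j => Y (i, j))) 2
  simp only [sqnorm, Fintype.sum_prod_type, Finset.mul_sum (Finset.univ : Finset (Fin n))]
  refine Finset.sum_le_sum fun i _ => ?_
  have h := key i
  change enorm' _ ^ 2 ≤ _ at h
  rw [mul_pow, hsq, hsq] at h
  exact h

lemma sq_sub_le_two {ι : Type*} [Fintype ι] (p q : ι → ℝ) :
    (p - q) ⬝ᵥ (p - q) ≤ 2 * (p ⬝ᵥ p) + 2 * (q ⬝ᵥ q) := by
  have h := dot_self_nonneg' (p + q)
  simp only [add_dotProduct, dotProduct_add] at h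
  simp only [sub_dotProduct, dotProduct_sub]
  linarith

/-- Expansion of `‖a - b + α c‖²` with two applications of Young's inequality, coming from
`0 ≤ ‖a - c‖²` (with weight `α`) and `0 ≤ ‖2b + αc‖²` (with weight `1/2`). -/
lemma expand_young {ι : Type*} [Fintype ι] {α : ℝ} (hα : 0 ≤ α) (a b c : ι → ℝ) :
    (a - b + α • c) ⬝ᵥ (a - b + α • c) ≤
      (1 + α) * (a ⬝ᵥ a) - 2 * (a ⬝ᵥ b) + 3 * (b ⬝ᵥ b) + (α + 3 / 2 * α ^ 2) * (c ⬝ᵥ c) := by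
  have h1 := mul_nonneg hα (dot_self_nonneg' (a - c))
  have h2 := dot_self_nonneg' ((2 : ℝ) • b + α • c)
  simp only [add_dotProduct, dotProduct_add, sub_dotProduct, dotProduct_sub, smul_dotProduct,
    dotProduct_smul, smul_eq_mul] at h1 h2 ⊢
  rw [dotProduct_comm c a] at h1 ⊢
  rw [dotProduct_comm c b] at h2 ⊢
  rw [dotProduct_comm b a]
  linarith

/-- **Consensus error lemma.**  Under Assumptions 1–2, with λ̃ᵗ = Ãᵀμ, the TiCoPD primal step,
β = 1 − αθM, αθρ̃₁ ≤ 1 and αθρ̃₁² ≤ 2ρ̃₂: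
‖X^{t+1}‖²_K̃ ≤ (1 + α − 2αθρ̃₂ + α²θ²ρ̃₁² + (2α+3α²)L²)‖Xᵗ‖²_K̃
  − 2⟨Xᵗ, vᵗ⟩_{(I−αθÃᵀÃ)K̃} + 3‖vᵗ‖²_K̃ + (2α+3α²)θ²(ρ̃₁+M)²‖X̂ᵗ − Xᵗ‖². -/
theorem ticopd_consensus_error
    {n d e : ℕ} (hn : 2 ≤ n) (hd : 1 ≤ d)
    (A : Matrix (Fin e) (Fin n) ℝ) (hA : IsIncidence A)
    -- Assumption 2
    (ρ₁ ρ₂ : ℝ) (hρ : ρ₂ ≤ ρ₁) (hρ₂ : 0 < ρ₂)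
    (h2a : (lapl d A - ρ₂ • Ktil n d).PosSemidef)
    (h2b : (ρ₁ • Ktil n d - lapl d A).PosSemidef)
    -- Assumption 1
    (f : Fin n → (Fin d → ℝ) → ℝ) (gradf : Fin n → (Fin d → ℝ) → (Fin d → ℝ)) (L : ℝ)
    (hdiff : ∀ i x, HasFDerivAt (f i) (dotCLM (gradf i x)) x)
    (hlip : ∀ i x y, enorm' (gradf i x - gradf i y) ≤ L * enorm' (x - y))
    -- dual variable in the range of Ãᵀ
    (lam : Fin n × Fin d → ℝ) (μv : Fin e × Fin d → ℝ) (hlam : lam = (Atil d A)ᵀ.mulVec μv)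
    -- step sizes
    (α β θ : ℝ) (hα : 0 < α) (hθ : 0 < θ)
    (hβ : β = 1 - α * θ * specNorm (lapl d A))
    (hs1 : α * θ * ρ₁ ≤ 1) (hs2 : α * θ * ρ₁ ^ 2 ≤ 2 * ρ₂)
    -- one primal step
    (X Xhat Xnext : Fin n × Fin d → ℝ)
    (hXnext : Xnext = β • X + (1 - β) • Xhat -
        α • (gradF gradf X + lam + θ • (lapl d A).mulVec Xhat)) :
    wnorm2 (Ktil n d) Xnext ≤
      (1 + α - 2 * α * θ * ρ₂ + α ^ 2 * θ ^ 2 * ρ₁ ^ 2 + (2 * α + 3 * α ^ 2) * L ^ 2) *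
          wnorm2 (Ktil n d) X -
        2 * winner ((1 - (α * θ) • lapl d A) * Ktil n d) X (vTi gradf α lam X) +
        3 * wnorm2 (Ktil n d) (vTi gradf α lam X) +
        (2 * α + 3 * α ^ 2) * θ ^ 2 * (ρ₁ + specNorm (lapl d A)) ^ 2 * sqnorm (Xhat - X) := by
  have hρ₁ : 0 < ρ₁ := hρ₂.trans_le hρ
  have hM : 0 ≤ specNorm (lapl d A) := norm_nonneg _
  have hwn := fun x => wnorm2_Ktil (d := d) hn x
  have hSt := lapl_transpose d A
  have hKt := Ktil_transpose n d
  have hSK := fun x => lapl_Ktil (d := d) hA x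
  have hKS := fun x => Ktil_lapl (d := d) hA x
  have hctr := fun x => Ktil_contract (d := d) hn x
  have hKK := fun x => Ktil_Ktil (d := d) hn x
  have hgrad := gradF_sub_sq_le hlip X (consVec n (xbar X))
  rw [← Ktil_mulVec, sqnorm_eq_dot, sqnorm_eq_dot] at hgrad
  have hlow (x) : ρ₂ * (Ktil n d *ᵥ x ⬝ᵥ Ktil n d *ᵥ x) ≤ x ⬝ᵥ lapl d A *ᵥ x := by
    have h := posSemidef_dot_nonneg h2a x
    rw [sub_mulVec, smul_mulVec, dotProduct_sub, dotProduct_smul, smul_eq_mul] at h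
    have := hwn x
    unfold wnorm2 at this
    rw [← this]; linarith
  have hupp (x) : x ⬝ᵥ lapl d A *ᵥ x ≤ ρ₁ * (Ktil n d *ᵥ x ⬝ᵥ Ktil n d *ᵥ x) := by
    have h := posSemidef_dot_nonneg h2b x
    rw [sub_mulVec, smul_mulVec, dotProduct_sub, dotProduct_smul, smul_eq_mul] at h
    have := hwn x
    unfold wnorm2 at this
    rw [← this]; linarith
  have hpos (x) : 0 ≤ x ⬝ᵥ lapl d A *ᵥ x :=
    (mul_nonneg hρ₂.le (dot_self_nonneg' _)).trans (hlow x)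
  have hS2 (x) := lapl_sq_le hρ₁ hSt hpos
    (fun x => (hupp x).trans (mul_le_mul_of_nonneg_left (hctr x) hρ₁.le)) x
  rw [sqnorm_eq_dot]
  set M := specNorm (lapl d A)
  set S := lapl d A
  set K := Ktil n d
  set v := vTi gradf α lam X with hv
  set g := gradF gradf X - gradF gradf (consVec n (xbar X)) with hg
  set E := Xhat - X with hE
  set w := M • E - S *ᵥ E with hw
  set u := θ • w - g with hu
  set a := K *ᵥ X - (α * θ) • S *ᵥ X with ha
  have hstep : Xnext = X - (α * θ) • S *ᵥ X - v + α • u := by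
    have hXh : Xhat = X + E := by rw [hE]; abel
    rw [hXnext, hβ, hu, hw, hg, hv, hXh, vTi, mulVec_add]
    ext p
    simp only [Pi.add_apply, Pi.sub_apply, Pi.smul_apply, smul_eq_mul]
    ring
  have hKstep : K *ᵥ Xnext = a - K *ᵥ v + α • K *ᵥ u := by
    rw [hstep, mulVec_add, mulVec_sub, mulVec_sub, mulVec_smul, mulVec_smul, hKS, ha]
  have hcross : winner ((1 - (α * θ) • S) * K) X v = a ⬝ᵥ K *ᵥ v := by
    rw [winner, ← mulVec_mulVec, sub_mulVec, one_mulVec, smul_mulVec, ha, dotProduct_sub,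
      sub_dotProduct, dotProduct_smul, smul_dotProduct, dot_mulVec_symm hSt,
      ← dot_mulVec_symm hKt, hKK]
  -- `‖a‖² = ‖KX‖² - 2αθ ⟨X, SX⟩ + α²θ² ‖SX‖²`
  have haa : a ⬝ᵥ a ≤ (1 - 2 * α * θ * ρ₂ + α ^ 2 * θ ^ 2 * ρ₁ ^ 2) * (K *ᵥ X ⬝ᵥ K *ᵥ X) := by
    have e1 : K *ᵥ X ⬝ᵥ S *ᵥ X = X ⬝ᵥ S *ᵥ X := by rw [← dot_mulVec_symm hKt, hKS]
    have e2 : a ⬝ᵥ a = K *ᵥ X ⬝ᵥ K *ᵥ X - 2 * (α * θ) * (X ⬝ᵥ S *ᵥ X)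
        + (α * θ) ^ 2 * (S *ᵥ X ⬝ᵥ S *ᵥ X) := by
      simp only [ha, sub_dotProduct, dotProduct_sub, smul_dotProduct, dotProduct_smul, smul_eq_mul]
      rw [dotProduct_comm (S *ᵥ X) (K *ᵥ X), e1]
      ring
    have h1 := mul_le_mul_of_nonneg_left (hlow X) (by positivity : 0 ≤ 2 * (α * θ))
    have h2 := mul_le_mul_of_nonneg_left
      ((hS2 X).trans (mul_le_mul_of_nonneg_left (hupp X) hρ₁.le)) (sq_nonneg (α * θ))
    rw [e2]
    linarith
  have haa' : a ⬝ᵥ a ≤ K *ᵥ X ⬝ᵥ K *ᵥ X := by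
    have h1 := mul_le_mul_of_nonneg_left hs2 (by positivity : 0 ≤ α * θ)
    refine haa.trans (mul_le_of_le_one_left (dot_self_nonneg' _) ?_)
    linarith
  have hww : w ⬝ᵥ w ≤ (ρ₁ + M) ^ 2 * (E ⬝ᵥ E) := by
    have e2 : w ⬝ᵥ w = M ^ 2 * (E ⬝ᵥ E) - 2 * M * (E ⬝ᵥ S *ᵥ E) + S *ᵥ E ⬝ᵥ S *ᵥ E := by
      simp only [hw, sub_dotProduct, dotProduct_sub, smul_dotProduct, dotProduct_smul, smul_eq_mul]
      rw [dotProduct_comm (S *ᵥ E) E]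
      ring
    have h1 := mul_nonneg hM (hpos E)
    have h2 := (hS2 E).trans (mul_le_mul_of_nonneg_left
      ((hupp E).trans (mul_le_mul_of_nonneg_left (hctr E) hρ₁.le)) hρ₁.le)
    have h3 := mul_nonneg (mul_nonneg hρ₁.le hM) (dot_self_nonneg' E)
    rw [e2]
    linarith
  have huu : K *ᵥ u ⬝ᵥ K *ᵥ u ≤
      2 * (θ ^ 2 * ((ρ₁ + M) ^ 2 * (E ⬝ᵥ E))) + 2 * (L ^ 2 * (K *ᵥ X ⬝ᵥ K *ᵥ X)) := by
    have h1 := sq_sub_le_two (θ • w) g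
    rw [smul_dotProduct, dotProduct_smul, smul_eq_mul, smul_eq_mul] at h1
    have h2 := mul_le_mul_of_nonneg_left hww (sq_nonneg θ)
    have h3 := hctr u
    linarith
  rw [hwn, hwn, hwn, hKstep, hcross]
  have h1 := expand_young hα.le a (K *ᵥ v) (K *ᵥ u)
  have h2 := mul_le_mul_of_nonneg_left huu (by positivity : 0 ≤ α + 3 / 2 * α ^ 2)
  have h3 := mul_le_mul_of_nonneg_left haa' hα.le
  linarith

end
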